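/- arXiv:1106.6221 — 2 statements merged into one kernel-verified Lean document; each statement's English description precedes it below -/
import Mathlib

section
/- Let p,q>1, a>0, α,β≥0 with α+pβ = a(pq−1)+2(p+1), and let A,B,K,R,T₀ be positive constants with T₀ ≥ R. Fix δ ∈ (0,(pq−1)/(2p+2)) and set K₀ = [ a^{2p+2} 2^{α+pβ+2p+1} (q+2)^{2p+2} (q+1)^p / (A B^p) · (1 − 2^{−aδ})^{−2p−2} ]^{1/(pq−1)} and T₁ = max{T₀, (2q+3)U(0)/U'(0)}. Suppose U,V ∈ C²([0,T]) satisfy: U(t) ≥ K t^a for t ≥ T₀; U''(t) ≥ A(t+R)^{−α}|V(t)|^p for t ≥ 0; V''(t) ≥ B(t+R)^{−β}|U(t)|^q for t ≥ 0; and U(0) ≥ 0, U'(0) > 0, V(0) ≥ 0, V'(0) > 0. If K ≥ K₀, then T ≤ 2T₁. -/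
open Real Set

/-!
Put `W = U - U 0`. Since `U'` increases and `(t + R) ^ (-β)` decreases, integrating
`V'' ≥ B (t + R) ^ (-β) W ^ q` against `W'` twice and the resulting lower bound for `V`, inserted
in `U'' ≥ A (t + R) ^ (-α) V ^ p`, once more, gives an inequality between powers of `W'` and `W`.
With `γ = (p q - 1) / (2 p + 2)` the balance of the exponents turns it into
`W' ≥ E t ^ (-(a γ + 1)) W ^ (1 + γ)` for `t ≥ R`, which is invariant under the scaling
`W(t) ↦ s ^ (-a) W(s t)`. A positive solution that survives on `[x, 2 x]` is therefore bounded at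
`x` by a constant multiple of `x ^ a`, and `U ≥ K t ^ a` violates the bound when `K` is large.
-/

lemma monotoneOn_Icc_of_hasDerivWithinAt_nonneg {f f' : ℝ → ℝ} {x y : ℝ}
    (hf : ∀ t ∈ Icc x y, HasDerivWithinAt f (f' t) (Icc x y) t)
    (hf' : ∀ t ∈ Icc x y, 0 ≤ f' t) : MonotoneOn f (Icc x y) :=
  monotoneOn_of_hasDerivWithinAt_nonneg (convex_Icc x y) (fun t ht => (hf t ht).continuousWithinAt)
    (fun t ht => (hf t (interior_subset ht)).mono interior_subset)
    (fun t ht => hf' t (interior_subset ht))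

lemma add_mul_sub_le_of_hasDerivWithinAt_nonneg {f f' f'' : ℝ → ℝ} {x y t : ℝ}
    (hf : ∀ t ∈ Icc x y, HasDerivWithinAt f (f' t) (Icc x y) t)
    (hf' : ∀ t ∈ Icc x y, HasDerivWithinAt f' (f'' t) (Icc x y) t)
    (hf'' : ∀ t ∈ Icc x y, 0 ≤ f'' t) (ht : t ∈ Icc x y) :
    f x + f' x * (t - x) ≤ f t := by
  have hx : x ∈ Icc x y := left_mem_Icc.2 (ht.1.trans ht.2)
  have hmono : MonotoneOn (fun s => f s - f' x * s) (Icc x y) :=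
    monotoneOn_Icc_of_hasDerivWithinAt_nonneg
      (fun s hs => (hf s hs).sub ((hasDerivWithinAt_id s _).const_mul _))
      (fun s hs => by
        have : f' x ≤ f' s := monotoneOn_Icc_of_hasDerivWithinAt_nonneg hf' hf'' hx hs hs.1
        linarith)
  linarith [hmono hx ht ht.1]

lemma mul_sub_add_rpow_neg_le_of_mul_rpow_le_deriv {G g W W' : ℝ → ℝ} {x y γ : ℝ}
    (hxy : x ≤ y) (hγ : 0 ≤ γ)
    (hG : ∀ t ∈ Icc x y, HasDerivWithinAt G (g t) (Icc x y) t)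
    (hW : ∀ t ∈ Icc x y, HasDerivWithinAt W (W' t) (Icc x y) t)
    (hWpos : ∀ t ∈ Icc x y, 0 < W t)
    (hgrow : ∀ t ∈ Icc x y, g t * W t ^ (1 + γ) ≤ W' t) :
    γ * (G y - G x) + W y ^ (-γ) ≤ W x ^ (-γ) := by
  have hmono : MonotoneOn (fun t => -(γ * G t) - W t ^ (-γ)) (Icc x y) :=
    monotoneOn_Icc_of_hasDerivWithinAt_nonneg
      (fun t ht => ((hG t ht).const_mul γ).neg.sub
        ((hW t ht).rpow_const (Or.inl (hWpos t ht).ne')))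
      (fun t ht => by
        have hcancel : W t ^ (-γ - 1) * W t ^ (1 + γ) = 1 := by
          rw [← rpow_add (hWpos t ht), show -γ - 1 + (1 + γ) = 0 by ring, rpow_zero]
        have hscaled := mul_le_mul_of_nonneg_left (hgrow t ht)
          (mul_nonneg hγ (rpow_pos_of_pos (hWpos t ht) (-γ - 1)).le)
        linear_combination hscaled - γ * g t * hcancel)
  linarith [hmono (left_mem_Icc.2 hxy) (right_mem_Icc.2 hxy) hxy]

lemma one_sub_two_rpow_neg_pos {c : ℝ} (hc : 0 < c) : (0 : ℝ) < 1 - 2 ^ (-c) :=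
  sub_pos.2 (rpow_lt_one_of_one_lt_of_neg one_lt_two (neg_neg_of_pos hc))

lemma mul_rpow_lt_of_critical_growth {W W' : ℝ → ℝ} {x a γ E : ℝ} (hx : 0 < x) (ha : 0 < a)
    (hγ : 0 < γ)
    (hW : ∀ t ∈ Icc x (2 * x), HasDerivWithinAt W (W' t) (Icc x (2 * x)) t)
    (hWpos : ∀ t ∈ Icc x (2 * x), 0 < W t)
    (hgrow : ∀ t ∈ Icc x (2 * x), E * t ^ (-(a * γ + 1)) * W t ^ (1 + γ) ≤ W' t) :
    E * (1 - 2 ^ (-(a * γ))) * W x ^ γ < a * x ^ (a * γ) := by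
  have hle : x ≤ 2 * x := by linarith
  have hG : ∀ t ∈ Icc x (2 * x), HasDerivWithinAt (fun t => -(E / (a * γ)) * t ^ (-(a * γ)))
      (E * t ^ (-(a * γ + 1))) (Icc x (2 * x)) t := fun t ht => by
    refine ((hasDerivAt_rpow_const (Or.inl (hx.trans_le ht.1).ne')).const_mul
      _).hasDerivWithinAt.congr_deriv ?_
    rw [neg_add']
    field_simp
  have hsep := mul_sub_add_rpow_neg_le_of_mul_rpow_le_deriv hle hγ.le hG hW hWpos hgrow
  have hWx : 0 < W x ^ γ := rpow_pos_of_pos (hWpos x (left_mem_Icc.2 hle)) γ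
  have hWy : 0 < W (2 * x) ^ (-γ) := rpow_pos_of_pos (hWpos _ (right_mem_Icc.2 hle)) _
  have hxa : 0 < x ^ (a * γ) := rpow_pos_of_pos hx _
  have hlt : E / a * ((x ^ (a * γ))⁻¹ * (1 - 2 ^ (-(a * γ)))) < (W x ^ γ)⁻¹ := by
    rw [← rpow_neg hx.le, ← rpow_neg (hWpos x (left_mem_Icc.2 hle)).le]
    rw [mul_rpow two_pos.le hx.le] at hsep
    calc E / a * (x ^ (-(a * γ)) * (1 - 2 ^ (-(a * γ))))
        = γ * (-(E / (a * γ)) * (2 ^ (-(a * γ)) * x ^ (-(a * γ)))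
            - -(E / (a * γ)) * x ^ (-(a * γ))) := by field_simp; ring
      _ < W x ^ (-γ) := by linarith
  calc E * (1 - 2 ^ (-(a * γ))) * W x ^ γ
      = E / a * ((x ^ (a * γ))⁻¹ * (1 - 2 ^ (-(a * γ)))) * (a * x ^ (a * γ) * W x ^ γ) := by
        field_simp
    _ < (W x ^ γ)⁻¹ * (a * x ^ (a * γ) * W x ^ γ) := by gcongr
    _ = a * x ^ (a * γ) := by field_simp

lemma mul_rpow_mul_rpow_lt_of_critical_growth {W W' : ℝ → ℝ} {x a γ r R D : ℝ} (ha : 0 < a)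
    (hγ : 0 < γ) (hr : 0 < r) (hR : 0 < R) (hRx : R ≤ x) (hD : 0 < D)
    (hW : ∀ t ∈ Icc x (2 * x), HasDerivWithinAt W (W' t) (Icc x (2 * x)) t)
    (hWpos : ∀ t ∈ Icc x (2 * x), 0 < W t) (hW'0 : ∀ t ∈ Icc x (2 * x), 0 ≤ W' t)
    (hgrow : ∀ t ∈ Icc x (2 * x),
      D * (t + R) ^ (-((a * γ + 1) * r)) * W t ^ ((1 + γ) * r) ≤ W' t ^ r) :
    D * 2 ^ (-((a * γ + 1) * r)) * (1 - 2 ^ (-(a * γ))) ^ r * W x ^ (γ * r)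
      < a ^ r * x ^ (a * γ * r) := by
  have hx : 0 < x := hR.trans_le hRx
  have hWx : 0 < W x := hWpos x (left_mem_Icc.2 (by linarith))
  have hDroot : (D ^ r⁻¹) ^ r = D := rpow_inv_rpow hD.le hr.ne'
  have hroot : ∀ t ∈ Icc x (2 * x),
      D ^ r⁻¹ * 2 ^ (-(a * γ + 1)) * t ^ (-(a * γ + 1)) * W t ^ (1 + γ) ≤ W' t := fun t ht => by
    have ht0 : 0 < t := hx.trans_le ht.1
    have hWt := hWpos t ht
    refine (rpow_le_rpow_iff (by positivity) (hW'0 t ht) hr).1 (le_trans ?_ (hgrow t ht))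
    rw [mul_assoc (D ^ r⁻¹), ← mul_rpow two_pos.le ht0.le, mul_rpow (by positivity) (by positivity),
      mul_rpow (by positivity) (by positivity), hDroot, ← rpow_mul (by positivity),
      ← rpow_mul hWt.le, neg_mul]
    gcongr D * ?_ * _
    exact rpow_le_rpow_of_nonpos (by linarith) (by linarith [ht.1])
      (neg_nonpos.2 (by positivity))
  have hgap : (0 : ℝ) ≤ 1 - 2 ^ (-(a * γ)) := (one_sub_two_rpow_neg_pos (by positivity)).le
  calc D * 2 ^ (-((a * γ + 1) * r)) * (1 - 2 ^ (-(a * γ))) ^ r * W x ^ (γ * r)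
      = (D ^ r⁻¹ * 2 ^ (-(a * γ + 1)) * (1 - 2 ^ (-(a * γ))) * W x ^ γ) ^ r := by
        rw [mul_rpow (by positivity) (by positivity), mul_rpow (by positivity) hgap,
          mul_rpow (by positivity) (by positivity), hDroot, ← rpow_mul two_pos.le,
          ← rpow_mul hWx.le, neg_mul]
    _ < (a * x ^ (a * γ)) ^ r :=
        rpow_lt_rpow (by positivity) (mul_rpow_lt_of_critical_growth hx ha hγ hW hWpos hroot) hr
    _ = a ^ r * x ^ (a * γ * r) := by
        rw [mul_rpow ha.le (by positivity), ← rpow_mul hx.le]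

lemma mul_rpow_div_le_of_mul_deriv_mul_rpow_le {f f' W W' w : ℝ → ℝ} {x y m t : ℝ} (hm : 0 ≤ m)
    (hf : ∀ t ∈ Icc x y, HasDerivWithinAt f (f' t) (Icc x y) t)
    (hW : ∀ t ∈ Icc x y, HasDerivWithinAt W (W' t) (Icc x y) t)
    (hw : AntitoneOn w (Icc x y)) (hfx : 0 ≤ f x) (hWx : W x = 0)
    (hW0 : ∀ t ∈ Icc x y, 0 ≤ W t) (hW'0 : ∀ t ∈ Icc x y, 0 ≤ W' t)
    (hf' : ∀ t ∈ Icc x y, w t * (W' t * W t ^ m) ≤ f' t) (ht : t ∈ Icc x y) :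
    w t * (W t ^ (m + 1) / (m + 1)) ≤ f t := by
  have hm1 : 0 < m + 1 := by linarith
  have hsub : Icc x t ⊆ Icc x y := Icc_subset_Icc_right ht.2
  -- Freezing the weight at `w t`, its minimum on `[x, t]`, makes the lower bound a derivative.
  have hmono : MonotoneOn (fun s => f s - w t * (W s ^ (m + 1) / (m + 1))) (Icc x t) :=
    monotoneOn_Icc_of_hasDerivWithinAt_nonneg
      (fun s hs => ((hf s (hsub hs)).sub ((((hW s (hsub hs)).rpow_const
        (Or.inr (by linarith))).div_const (m + 1)).const_mul (w t))).mono hsub)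
      (fun s hs => by
        have hWm : 0 ≤ W' s * W s ^ m :=
          mul_nonneg (hW'0 s (hsub hs)) (rpow_nonneg (hW0 s (hsub hs)) m)
        have hweight := mul_le_mul_of_nonneg_right (hw (hsub hs) ht hs.2) hWm
        have hderiv : W' s * (m + 1) * W s ^ (m + 1 - 1) / (m + 1) = W' s * W s ^ m := by
          rw [add_sub_cancel_right]
          field_simp
        rw [hderiv]
        linarith [hf' s (hsub hs)])
  have hle := hmono (left_mem_Icc.2 ht.1) (right_mem_Icc.2 ht.1) ht.1
  simp only [hWx, zero_rpow hm1.ne', zero_div, mul_zero, sub_zero] at hle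
  linarith

section WeightedSystem

variable {p q x y t : ℝ} {v w W W' W'' V V' V'' : ℝ → ℝ}

lemma mul_rpow_le_deriv_mul_deriv (hq : 0 ≤ q)
    (hW : ∀ t ∈ Icc x y, HasDerivWithinAt W (W' t) (Icc x y) t)
    (hW' : ∀ t ∈ Icc x y, HasDerivWithinAt W' (W'' t) (Icc x y) t)
    (hV' : ∀ t ∈ Icc x y, HasDerivWithinAt V' (V'' t) (Icc x y) t)
    (hw : AntitoneOn w (Icc x y)) (hWx : W x = 0)
    (hW0 : ∀ t ∈ Icc x y, 0 ≤ W t) (hW'0 : ∀ t ∈ Icc x y, 0 ≤ W' t)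
    (hW''0 : ∀ t ∈ Icc x y, 0 ≤ W'' t) (hV'0 : ∀ t ∈ Icc x y, 0 ≤ V' t)
    (hV'' : ∀ t ∈ Icc x y, w t * W t ^ q ≤ V'' t) (ht : t ∈ Icc x y) :
    w t * (W t ^ (q + 1) / (q + 1)) ≤ W' t * V' t := by
  have hx : x ∈ Icc x y := left_mem_Icc.2 (ht.1.trans ht.2)
  refine mul_rpow_div_le_of_mul_deriv_mul_rpow_le (f := fun t => W' t * V' t) hq
    (fun s hs => (hW' s hs).mul (hV' s hs)) hW hw (mul_nonneg (hW'0 x hx) (hV'0 x hx)) hWx hW0 hW'0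
    (fun s hs => ?_) ht
  have hforcing := mul_le_mul_of_nonneg_left (hV'' s hs) (hW'0 s hs)
  have hrest := mul_nonneg (hW''0 s hs) (hV'0 s hs)
  linarith

lemma mul_rpow_le_deriv_sq_mul (hq : 0 ≤ q)
    (hW : ∀ t ∈ Icc x y, HasDerivWithinAt W (W' t) (Icc x y) t)
    (hW' : ∀ t ∈ Icc x y, HasDerivWithinAt W' (W'' t) (Icc x y) t)
    (hV : ∀ t ∈ Icc x y, HasDerivWithinAt V (V' t) (Icc x y) t)
    (hV' : ∀ t ∈ Icc x y, HasDerivWithinAt V' (V'' t) (Icc x y) t)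
    (hw : AntitoneOn w (Icc x y)) (hWx : W x = 0)
    (hW0 : ∀ t ∈ Icc x y, 0 ≤ W t) (hW'0 : ∀ t ∈ Icc x y, 0 ≤ W' t)
    (hW''0 : ∀ t ∈ Icc x y, 0 ≤ W'' t)
    (hV0 : ∀ t ∈ Icc x y, 0 ≤ V t) (hV'0 : ∀ t ∈ Icc x y, 0 ≤ V' t)
    (hV'' : ∀ t ∈ Icc x y, w t * W t ^ q ≤ V'' t) (ht : t ∈ Icc x y) :
    w t * (W t ^ (q + 2) / ((q + 1) * (q + 2))) ≤ W' t ^ 2 * V t := by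
  have hx : x ∈ Icc x y := left_mem_Icc.2 (ht.1.trans ht.2)
  have hle := mul_rpow_div_le_of_mul_deriv_mul_rpow_le (f := fun t => W' t ^ 2 * V t)
    (w := fun t => w t / (q + 1)) (m := q + 1) (by linarith)
    (fun s hs => ((hW' s hs).fun_pow 2).mul (hV s hs)) hW
    (fun s hs s' hs' hss' => div_le_div_of_nonneg_right (hw hs hs' hss') (by linarith))
    (mul_nonneg (sq_nonneg _) (hV0 x hx)) hWx hW0 hW'0 (fun s hs => ?_) ht
  · rw [add_assoc, one_add_one_eq_two] at hle
    convert hle using 1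
    field_simp
  · have hprev := mul_le_mul_of_nonneg_left
      (mul_rpow_le_deriv_mul_deriv hq hW hW' hV' hw hWx hW0 hW'0 hW''0 hV'0 hV'' hs) (hW'0 s hs)
    have hrest := mul_nonneg (mul_nonneg (hW'0 s hs) (hW''0 s hs)) (hV0 s hs)
    calc w s / (q + 1) * (W' s * W s ^ (q + 1))
        = W' s * (w s * (W s ^ (q + 1) / (q + 1))) := by ring
      _ ≤ W' s * (W' s * V' s) := hprev
      _ ≤ W' s * (W' s * V' s) + 2 * (W' s * W'' s * V s) := by linarith
      _ = _ := by push_cast; ring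

lemma mul_rpow_le_deriv_rpow (hp : 0 ≤ p) (hq : 0 ≤ q)
    (hW : ∀ t ∈ Icc x y, HasDerivWithinAt W (W' t) (Icc x y) t)
    (hW' : ∀ t ∈ Icc x y, HasDerivWithinAt W' (W'' t) (Icc x y) t)
    (hV : ∀ t ∈ Icc x y, HasDerivWithinAt V (V' t) (Icc x y) t)
    (hV' : ∀ t ∈ Icc x y, HasDerivWithinAt V' (V'' t) (Icc x y) t)
    (hv0 : ∀ t ∈ Icc x y, 0 ≤ v t) (hw0 : ∀ t ∈ Icc x y, 0 ≤ w t)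
    (hw : AntitoneOn w (Icc x y)) (hvw : AntitoneOn (fun t => v t * w t ^ p) (Icc x y))
    (hWx : W x = 0) (hW0 : ∀ t ∈ Icc x y, 0 ≤ W t) (hW'0 : ∀ t ∈ Icc x y, 0 ≤ W' t)
    (hV0 : ∀ t ∈ Icc x y, 0 ≤ V t) (hV'0 : ∀ t ∈ Icc x y, 0 ≤ V' t)
    (hW'' : ∀ t ∈ Icc x y, v t * V t ^ p ≤ W'' t)
    (hV'' : ∀ t ∈ Icc x y, w t * W t ^ q ≤ V'' t) (ht : t ∈ Icc x y) :
    v t * w t ^ p / ((q + 1) * (q + 2)) ^ p * (W t ^ (p * (q + 2) + 1) / (p * (q + 2) + 1))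
      ≤ W' t ^ (2 * p + 2) / (2 * p + 2) := by
  have hx : x ∈ Icc x y := left_mem_Icc.2 (ht.1.trans ht.2)
  have hW''0 : ∀ t ∈ Icc x y, 0 ≤ W'' t := fun t ht =>
    (mul_nonneg (hv0 t ht) (rpow_nonneg (hV0 t ht) p)).trans (hW'' t ht)
  refine mul_rpow_div_le_of_mul_deriv_mul_rpow_le (f := fun t => W' t ^ (2 * p + 2) / (2 * p + 2))
    (w := fun t => v t * w t ^ p / ((q + 1) * (q + 2)) ^ p) (by positivity)
    (fun s hs => ((hW' s hs).rpow_const (Or.inr (by linarith))).div_const _) hW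
    (fun s hs s' hs' hss' => div_le_div_of_nonneg_right (hvw hs hs' hss') (by positivity))
    (div_nonneg (rpow_nonneg (hW'0 x hx) _) (by positivity)) hWx hW0 hW'0 (fun s hs => ?_) ht
  have hvs := hv0 s hs
  have hws := hw0 s hs
  have hWs := hW0 s hs
  have hW's := hW'0 s hs
  have hVs := hV0 s hs
  calc v s * w s ^ p / ((q + 1) * (q + 2)) ^ p * (W' s * W s ^ (p * (q + 2)))
      = W' s * (v s * (w s * (W s ^ (q + 2) / ((q + 1) * (q + 2)))) ^ p) := by
        rw [mul_rpow hws (by positivity), div_rpow (by positivity) (by positivity),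
          ← rpow_mul hWs, mul_comm (q + 2) p]
        ring
    _ ≤ W' s * (v s * (W' s ^ 2 * V s) ^ p) := by
        gcongr W' s * (v s * ?_ ^ p)
        exact mul_rpow_le_deriv_sq_mul hq hW hW' hV hV' hw hWx hW0 hW'0 hW''0 hV0 hV'0 hV'' hs
    _ = W' s * W' s ^ (2 * p) * (v s * V s ^ p) := by
        rw [mul_rpow (by positivity) hVs, ← rpow_natCast_mul hW's, Nat.cast_ofNat]
        ring
    _ ≤ W' s * W' s ^ (2 * p) * W'' s := by
        gcongr
        exact hW'' s hs
    _ = W'' s * (2 * p + 2) * W' s ^ (2 * p + 2 - 1) / (2 * p + 2) := by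
        rw [show 2 * p + 2 - 1 = 2 * p + 1 by ring, rpow_add_one' hW's (by positivity)]
        field_simp

end WeightedSystem

lemma antitoneOn_const_mul_add_rpow_neg {c κ R T : ℝ} (hc : 0 ≤ c) (hκ : 0 ≤ κ) (hR : 0 < R) :
    AntitoneOn (fun t : ℝ => c * (t + R) ^ (-κ)) (Icc 0 T) := fun s hs t _ hst =>
  mul_le_mul_of_nonneg_left (rpow_le_rpow_of_nonpos (by linarith [hs.1]) (by linarith)
    (neg_nonpos.2 hκ)) hc

lemma one_add_inv_rpow_le_two_rpow {p q c : ℝ} (hp : 0 ≤ p) (hc : 0 < c) (hqc : 2 * q ≤ c) :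
    (1 + c⁻¹) ^ (p * q) ≤ 2 ^ p := by
  have hexp : (1 + c⁻¹) ^ c ≤ exp 1 := by
    calc (1 + c⁻¹) ^ c ≤ exp c⁻¹ ^ c := by gcongr; linarith [add_one_le_exp c⁻¹]
      _ = exp 1 := by rw [← exp_mul, inv_mul_cancel₀ hc.ne']
  calc (1 + c⁻¹) ^ (p * q) ≤ (1 + c⁻¹) ^ (c * (1 / 2) * p) :=
        rpow_le_rpow_of_exponent_le (le_add_of_nonneg_right (by positivity)) (by nlinarith)
    _ = (((1 + c⁻¹) ^ c) ^ (1 / 2 : ℝ)) ^ p := by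
        rw [← rpow_mul (by positivity), ← rpow_mul (by positivity), mul_assoc]
    _ ≤ (exp 1 ^ (1 / 2 : ℝ)) ^ p := by gcongr
    _ = exp (1 / 2) ^ p := by rw [← exp_mul, one_mul]
    _ ≤ exp (log 2) ^ p := by gcongr; linarith [log_two_gt_d9]
    _ = 2 ^ p := by rw [exp_log two_pos]

/-- A solution on `[0, T]` of the system `U'' ≥ A (t + R) ^ (-α) |V| ^ p`,
`V'' ≥ B (t + R) ^ (-β) |U| ^ q` of differential inequalities with nonnegative data at `0` and
`U' 0 > 0`. The functions `U'`, `U''`, `V'`, `V''` are the successive derivatives, one-sided at the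
endpoints of the interval. -/
structure IsODISolution (p q α β A B R T : ℝ) (U U' U'' V V' V'' : ℝ → ℝ) : Prop where
  hasDerivWithinAt_U : ∀ t ∈ Icc 0 T, HasDerivWithinAt U (U' t) (Icc 0 T) t
  hasDerivWithinAt_U' : ∀ t ∈ Icc 0 T, HasDerivWithinAt U' (U'' t) (Icc 0 T) t
  hasDerivWithinAt_V : ∀ t ∈ Icc 0 T, HasDerivWithinAt V (V' t) (Icc 0 T) t
  hasDerivWithinAt_V' : ∀ t ∈ Icc 0 T, HasDerivWithinAt V' (V'' t) (Icc 0 T) t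
  le_U'' : ∀ t ∈ Icc 0 T, A * (t + R) ^ (-α) * |V t| ^ p ≤ U'' t
  le_V'' : ∀ t ∈ Icc 0 T, B * (t + R) ^ (-β) * |U t| ^ q ≤ V'' t
  U_zero_nonneg : 0 ≤ U 0
  U'_zero_pos : 0 < U' 0
  V_zero_nonneg : 0 ≤ V 0
  V'_zero_nonneg : 0 ≤ V' 0

namespace IsODISolution

variable {p q a α β A B R T γ x t : ℝ} {U U' U'' V V' V'' : ℝ → ℝ}

lemma U''_nonneg (h : IsODISolution p q α β A B R T U U' U'' V V' V'') (hA : 0 ≤ A) (hR : 0 ≤ R)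
    (t : ℝ) (ht : t ∈ Icc 0 T) : 0 ≤ U'' t := by
  have htR : 0 ≤ t + R := add_nonneg ht.1 hR
  exact le_trans (by positivity) (h.le_U'' t ht)

lemma V''_nonneg (h : IsODISolution p q α β A B R T U U' U'' V V' V'') (hB : 0 ≤ B) (hR : 0 ≤ R)
    (t : ℝ) (ht : t ∈ Icc 0 T) : 0 ≤ V'' t := by
  have htR : 0 ≤ t + R := add_nonneg ht.1 hR
  exact le_trans (by positivity) (h.le_V'' t ht)

lemma U'_pos (h : IsODISolution p q α β A B R T U U' U'' V V' V'') (hA : 0 ≤ A) (hR : 0 ≤ R)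
    (ht : t ∈ Icc 0 T) : 0 < U' t :=
  h.U'_zero_pos.trans_le <| monotoneOn_Icc_of_hasDerivWithinAt_nonneg h.hasDerivWithinAt_U'
    (h.U''_nonneg hA hR) (left_mem_Icc.2 (ht.1.trans ht.2)) ht ht.1

lemma V'_nonneg (h : IsODISolution p q α β A B R T U U' U'' V V' V'') (hB : 0 ≤ B) (hR : 0 ≤ R)
    (ht : t ∈ Icc 0 T) : 0 ≤ V' t :=
  h.V'_zero_nonneg.trans <| monotoneOn_Icc_of_hasDerivWithinAt_nonneg h.hasDerivWithinAt_V'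
    (h.V''_nonneg hB hR) (left_mem_Icc.2 (ht.1.trans ht.2)) ht ht.1

lemma U'_zero_mul_le (h : IsODISolution p q α β A B R T U U' U'' V V' V'') (hA : 0 ≤ A)
    (hR : 0 ≤ R) (ht : t ∈ Icc 0 T) : U' 0 * t ≤ U t - U 0 := by
  have htangent := add_mul_sub_le_of_hasDerivWithinAt_nonneg h.hasDerivWithinAt_U
    h.hasDerivWithinAt_U' (h.U''_nonneg hA hR) ht
  linarith

lemma U_sub_nonneg (h : IsODISolution p q α β A B R T U U' U'' V V' V'') (hA : 0 ≤ A)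
    (hR : 0 ≤ R) (ht : t ∈ Icc 0 T) : 0 ≤ U t - U 0 :=
  (mul_nonneg h.U'_zero_pos.le ht.1).trans (h.U'_zero_mul_le hA hR ht)

lemma V_nonneg (h : IsODISolution p q α β A B R T U U' U'' V V' V'') (hB : 0 ≤ B) (hR : 0 ≤ R)
    (ht : t ∈ Icc 0 T) : 0 ≤ V t := by
  have htangent := add_mul_sub_le_of_hasDerivWithinAt_nonneg h.hasDerivWithinAt_V
    h.hasDerivWithinAt_V' (h.V''_nonneg hB hR) ht
  have hslope := mul_nonneg h.V'_zero_nonneg ht.1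
  linarith [h.V_zero_nonneg]

lemma mul_U_sub_rpow_le_U'_rpow (h : IsODISolution p q α β A B R T U U' U'' V V' V'')
    (hp : 0 ≤ p) (hq : 0 ≤ q) (hβ : 0 ≤ β) (hκ : 0 ≤ α + p * β) (hA : 0 ≤ A) (hB : 0 ≤ B)
    (hR : 0 < R) (ht : t ∈ Icc 0 T) :
    A * B ^ p * (t + R) ^ (-(α + p * β)) / ((q + 1) * (q + 2)) ^ p
        * ((U t - U 0) ^ (p * (q + 2) + 1) / (p * (q + 2) + 1))
      ≤ U' t ^ (2 * p + 2) / (2 * p + 2) := by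
  have htR : ∀ t ∈ Icc 0 T, 0 < t + R := fun t ht => add_pos_of_nonneg_of_pos ht.1 hR
  have hweight : ∀ t ∈ Icc 0 T, A * (t + R) ^ (-α) * (B * (t + R) ^ (-β)) ^ p
      = A * B ^ p * (t + R) ^ (-(α + p * β)) := fun t ht => by
    have hpos := htR t ht
    rw [mul_rpow hB (by positivity), ← rpow_mul hpos.le, mul_mul_mul_comm, ← rpow_add hpos]
    ring_nf
  rw [← hweight t ht]
  refine mul_rpow_le_deriv_rpow (W := fun t => U t - U 0) (v := fun t => A * (t + R) ^ (-α))
    (w := fun t => B * (t + R) ^ (-β)) hp hq (fun t ht => (h.hasDerivWithinAt_U t ht).sub_const _)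
    h.hasDerivWithinAt_U' h.hasDerivWithinAt_V h.hasDerivWithinAt_V'
    (fun t ht => mul_nonneg hA (rpow_nonneg (htR t ht).le _))
    (fun t ht => mul_nonneg hB (rpow_nonneg (htR t ht).le _))
    (antitoneOn_const_mul_add_rpow_neg hB hβ hR)
    ((antitoneOn_const_mul_add_rpow_neg (by positivity) hκ hR).congr
      fun t ht => (hweight t ht).symm)
    (sub_self _) (fun t ht => h.U_sub_nonneg hA hR.le ht) (fun t ht => (h.U'_pos hA hR.le ht).le)
    (fun t ht => h.V_nonneg hB hR.le ht) (fun t ht => h.V'_nonneg hB hR.le ht)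
    (fun t ht => ?_) (fun t ht => ?_) ht
  · simpa only [abs_of_nonneg (h.V_nonneg hB hR.le ht)] using h.le_U'' t ht
  · refine le_trans ?_ (h.le_V'' t ht)
    have hpos := htR t ht
    have hsub := h.U_sub_nonneg hA hR.le ht
    have habs : U t - U 0 ≤ |U t| := by linarith [le_abs_self (U t), h.U_zero_nonneg]
    gcongr

lemma U_sub_rpow_lt (h : IsODISolution p q α β A B R T U U' U'' V V' V'')
    (hp : 0 ≤ p) (hq : 0 ≤ q) (hpq : 1 < p * q) (ha : 0 < a) (hβ : 0 ≤ β)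
    (hγ : γ = (p * q - 1) / (2 * p + 2))
    (hbal : α + p * β = a * (p * q - 1) + 2 * (p + 1)) (hA : 0 < A) (hB : 0 < B)
    (hR : 0 < R) (hRx : R ≤ x) (hxT : 2 * x ≤ T) :
    (U x - U 0) ^ (p * q - 1)
      < a ^ (2 * p + 2) * 2 ^ (α + p * β) * (q + 2) ^ p * (q + 1) ^ p * (1 + γ) / (A * B ^ p)
        * (1 - 2 ^ (-(a * γ))) ^ (-(2 * p + 2)) * x ^ (a * (p * q - 1)) := by
  have hr : 0 < 2 * p + 2 := by positivity
  have hx : 0 < x := hR.trans_le hRx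
  have hsub : Icc x (2 * x) ⊆ Icc 0 T := Icc_subset_Icc hx.le hxT
  have hγ_pos : 0 < γ := hγ ▸ div_pos (sub_pos.2 hpq) hr
  have hγpq : γ * (2 * p + 2) = p * q - 1 := by rw [hγ]; field_simp
  have hgap : (0 : ℝ) < 1 - 2 ^ (-(a * γ)) := one_sub_two_rpow_neg_pos (mul_pos ha hγ_pos)
  have hκ : α + p * β = (a * γ + 1) * (2 * p + 2) := by linear_combination hbal - a * hγpq
  have hexp : p * (q + 2) + 1 = (1 + γ) * (2 * p + 2) := by linear_combination -hγpq
  have hgrow : ∀ t ∈ Icc x (2 * x), A * B ^ p / (((q + 1) * (q + 2)) ^ p * (1 + γ))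
      * (t + R) ^ (-((a * γ + 1) * (2 * p + 2))) * (U t - U 0) ^ ((1 + γ) * (2 * p + 2))
      ≤ U' t ^ (2 * p + 2) := fun t ht => by
    have hfirst := h.mul_U_sub_rpow_le_U'_rpow hp hq hβ (hκ ▸ by positivity) hA.le hB.le hR
      (hsub ht)
    rw [hexp, hκ, le_div_iff₀ hr] at hfirst
    refine le_of_eq_of_le ?_ hfirst
    field_simp
  have hlt := mul_rpow_mul_rpow_lt_of_critical_growth ha hγ_pos hr hR hRx (by positivity)
    (fun t ht => ((h.hasDerivWithinAt_U t (hsub ht)).sub_const _).mono hsub)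
    (fun t ht => (mul_pos h.U'_zero_pos (hx.trans_le ht.1)).trans_le
      (h.U'_zero_mul_le hA.le hR.le (hsub ht)))
    (fun t ht => (h.U'_pos hA.le hR.le (hsub ht)).le) hgrow
  rw [← hκ, mul_assoc a, hγpq, rpow_neg two_pos.le, mul_rpow (by positivity) (by positivity)] at hlt
  rw [rpow_neg hgap.le]
  set L : ℝ := 1 - 2 ^ (-(a * γ))
  field_simp at hlt ⊢
  linarith

lemma U_rpow_le_two_rpow_mul_U_sub_rpow (h : IsODISolution p q α β A B R T U U' U'' V V' V'')
    (hp : 0 ≤ p) (hq : 0 ≤ q) (hpq : 1 ≤ p * q) (hA : 0 ≤ A) (hR : 0 ≤ R)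
    (hx : x ∈ Icc 0 T) (hUx : 0 ≤ U x) (hshift : (2 * q + 3) * U 0 / U' 0 ≤ x) :
    U x ^ (p * q - 1) ≤ 2 ^ p * (U x - U 0) ^ (p * q - 1) := by
  have hsub := h.U_sub_nonneg hA hR hx
  have hratio : U x ≤ (1 + (2 * q + 3)⁻¹) * (U x - U 0) := by
    have hslope := h.U'_zero_mul_le hA hR hx
    rw [div_le_iff₀ h.U'_zero_pos] at hshift
    field_simp
    linarith
  calc U x ^ (p * q - 1)
      ≤ ((1 + (2 * q + 3)⁻¹) * (U x - U 0)) ^ (p * q - 1) := by gcongr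
    _ = (1 + (2 * q + 3)⁻¹) ^ (p * q - 1) * (U x - U 0) ^ (p * q - 1) :=
        mul_rpow (by positivity) hsub
    _ ≤ 2 ^ p * (U x - U 0) ^ (p * q - 1) := by
        gcongr
        exact (rpow_le_rpow_of_exponent_le (le_add_of_nonneg_right (by positivity))
          (sub_le_self _ zero_le_one)).trans
          (one_add_inv_rpow_le_two_rpow hp (by positivity) (by linarith))

end IsODISolution

lemma blowup_threshold_le {p q a κ A B γ δ : ℝ} (hp : 0 < p) (hq : 0 < q) (ha : 0 < a)
    (hA : 0 < A) (hB : 0 < B) (hγ : γ = (p * q - 1) / (2 * p + 2)) (hδ : 0 < δ) (hδγ : δ ≤ γ) :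
    2 ^ p * (a ^ (2 * p + 2) * 2 ^ κ * (q + 2) ^ p * (q + 1) ^ p * (1 + γ) / (A * B ^ p)
        * (1 - 2 ^ (-(a * γ))) ^ (-(2 * p + 2)))
      ≤ a ^ (2 * p + 2) * 2 ^ (κ + 2 * p + 1) * (q + 2) ^ (2 * p + 2) * (q + 1) ^ p / (A * B ^ p)
        * (1 - 2 ^ (-(a * δ))) ^ (-(2 * p + 2)) := by
  have hγ_pos : 0 < γ := hδ.trans_le hδγ
  have hgap : (0 : ℝ) < 1 - 2 ^ (-(a * δ)) := one_sub_two_rpow_neg_pos (by positivity)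
  have hgap' : (0 : ℝ) < 1 - 2 ^ (-(a * γ)) := one_sub_two_rpow_neg_pos (by positivity)
  have hgap_le :
      (1 - 2 ^ (-(a * γ)) : ℝ) ^ (-(2 * p + 2)) ≤ (1 - 2 ^ (-(a * δ))) ^ (-(2 * p + 2)) :=
    rpow_le_rpow_of_nonpos hgap (by gcongr; norm_num) (by linarith)
  have hγq : 1 + γ ≤ q + 2 := by
    rw [hγ, ← le_sub_iff_add_le', div_le_iff₀ (by positivity)]
    linarith [mul_pos hp hq]
  have hpow : 2 ^ p * 2 ^ κ * (q + 2) ^ p * (1 + γ) ≤ 2 ^ (κ + 2 * p + 1) * (q + 2) ^ (2 * p + 2) :=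
    calc 2 ^ p * 2 ^ κ * (q + 2) ^ p * (1 + γ) ≤ 2 ^ p * 2 ^ κ * (q + 2) ^ p * (q + 2) := by gcongr
      _ = 2 ^ (κ + p) * (q + 2) ^ (p + 1) := by
          rw [rpow_add two_pos, rpow_add_one (by positivity)]
          ring
      _ ≤ 2 ^ (κ + 2 * p + 1) * (q + 2) ^ (2 * p + 2) := by
          gcongr ?_ * ?_
          · exact rpow_le_rpow_of_exponent_le one_le_two (by linarith)
          · exact rpow_le_rpow_of_exponent_le (by linarith) (by linarith)
  calc 2 ^ p * (a ^ (2 * p + 2) * 2 ^ κ * (q + 2) ^ p * (q + 1) ^ p * (1 + γ) / (A * B ^ p)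
        * (1 - 2 ^ (-(a * γ))) ^ (-(2 * p + 2)))
      = a ^ (2 * p + 2) * (2 ^ p * 2 ^ κ * (q + 2) ^ p * (1 + γ)) * (q + 1) ^ p / (A * B ^ p)
        * (1 - 2 ^ (-(a * γ))) ^ (-(2 * p + 2)) := by ring
    _ ≤ a ^ (2 * p + 2) * (2 ^ (κ + 2 * p + 1) * (q + 2) ^ (2 * p + 2)) * (q + 1) ^ p / (A * B ^ p)
        * (1 - 2 ^ (-(a * δ))) ^ (-(2 * p + 2)) := by gcongr
    _ = _ := by ring

theorem blowup_ODI_system_general {p q a α β A B K R T₀ T γ : ℝ} {U U' U'' V V' V'' : ℝ → ℝ}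
    (hp : 0 ≤ p) (hq : 0 ≤ q) (hpq : 1 < p * q) (ha : 0 < a) (hβ : 0 ≤ β)
    (hbal : α + p * β = a * (p * q - 1) + 2 * (p + 1))
    (hA : 0 < A) (hB : 0 < B) (hK : 0 ≤ K) (hR : 0 < R) (hT₀R : R ≤ T₀)
    (hγ : γ = (p * q - 1) / (2 * p + 2))
    (h : IsODISolution p q α β A B R T U U' U'' V V' V'')
    (hU : ∀ t ∈ Icc 0 T, T₀ ≤ t → K * t ^ a ≤ U t)
    (hKC : 2 ^ p * (a ^ (2 * p + 2) * 2 ^ (α + p * β) * (q + 2) ^ p * (q + 1) ^ p * (1 + γ)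
        / (A * B ^ p) * (1 - 2 ^ (-(a * γ))) ^ (-(2 * p + 2))) ≤ K ^ (p * q - 1)) :
    T < 2 * max T₀ ((2 * q + 3) * U 0 / U' 0) := by
  by_contra! hT
  set x := max T₀ ((2 * q + 3) * U 0 / U' 0)
  set C := a ^ (2 * p + 2) * 2 ^ (α + p * β) * (q + 2) ^ p * (q + 1) ^ p * (1 + γ) / (A * B ^ p)
    * (1 - 2 ^ (-(a * γ))) ^ (-(2 * p + 2))
  have hRx : R ≤ x := hT₀R.trans (le_max_left _ _)
  have hx : 0 < x := hR.trans_le hRx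
  have hxT : x ∈ Icc 0 T := ⟨hx.le, by linarith⟩
  have : 0 ≤ p * q - 1 := by linarith
  have hKU : K * x ^ a ≤ U x := hU x hxT (le_max_left _ _)
  have hKx : 0 ≤ K * x ^ a := by positivity
  refine lt_irrefl (K ^ (p * q - 1) * x ^ (a * (p * q - 1))) ?_
  calc K ^ (p * q - 1) * x ^ (a * (p * q - 1))
      = (K * x ^ a) ^ (p * q - 1) := by rw [mul_rpow hK (by positivity), ← rpow_mul hx.le]
    _ ≤ U x ^ (p * q - 1) := by gcongr
    _ ≤ 2 ^ p * (U x - U 0) ^ (p * q - 1) :=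
        h.U_rpow_le_two_rpow_mul_U_sub_rpow hp hq hpq.le hA.le hR.le hxT (hKx.trans hKU)
          (le_max_right _ _)
    _ < 2 ^ p * (C * x ^ (a * (p * q - 1))) := by
        gcongr
        exact h.U_sub_rpow_lt hp hq hpq ha hβ hγ hbal hA hB hR hRx hT
    _ = 2 ^ p * C * x ^ (a * (p * q - 1)) := by ring
    _ ≤ K ^ (p * q - 1) * x ^ (a * (p * q - 1)) := by
        gcongr

/-- Blow-up lemma for systems of ordinary differential inequalities with a
critical balance of exponents: if `U, V ∈ C²([0,T])` satisfy
`U(t) ≥ K t^a` for `t ≥ T₀`, `U'' ≥ A(t+R)^{-α}|V|^p`, `V'' ≥ B(t+R)^{-β}|U|^q`,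
with positive initial slopes and nonnegative initial data, and `K ≥ K₀`,
then `T ≤ 2 T₁`. -/
theorem blowup_ODI_system
    (p q a α β A B K R T₀ T δ : ℝ)
    (U U' U'' V V' V'' : ℝ → ℝ)
    (hp : 1 < p) (hq : 1 < q) (ha : 0 < a) (hα : 0 ≤ α) (hβ : 0 ≤ β)
    (hbal : α + p * β = a * (p * q - 1) + 2 * (p + 1))
    (hA : 0 < A) (hB : 0 < B) (hK : 0 < K) (hR : 0 < R) (hT₀pos : 0 < T₀)
    (hT₀R : R ≤ T₀)
    (hδ : δ ∈ Ioo 0 ((p * q - 1) / (2 * p + 2)))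
    -- U and V are C² on [0,T], with first derivatives U', V' and second derivatives U'', V''
    (hU' : ∀ t ∈ Icc (0:ℝ) T, HasDerivWithinAt U (U' t) (Icc 0 T) t)
    (hU'' : ∀ t ∈ Icc (0:ℝ) T, HasDerivWithinAt U' (U'' t) (Icc 0 T) t)
    (hUc : ContinuousOn U'' (Icc 0 T))
    (hV' : ∀ t ∈ Icc (0:ℝ) T, HasDerivWithinAt V (V' t) (Icc 0 T) t)
    (hV'' : ∀ t ∈ Icc (0:ℝ) T, HasDerivWithinAt V' (V'' t) (Icc 0 T) t)
    (hVc : ContinuousOn V'' (Icc 0 T))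
    -- the differential inequalities
    (h1 : ∀ t ∈ Icc (0:ℝ) T, T₀ ≤ t → K * t ^ a ≤ U t)
    (h2 : ∀ t ∈ Icc (0:ℝ) T, A * (t + R) ^ (-α) * |V t| ^ p ≤ U'' t)
    (h3 : ∀ t ∈ Icc (0:ℝ) T, B * (t + R) ^ (-β) * |U t| ^ q ≤ V'' t)
    (h4U : 0 ≤ U 0) (h4U' : 0 < U' 0) (h4V : 0 ≤ V 0) (h4V' : 0 < V' 0)
    -- the threshold constant
    (hKK₀ : (a ^ (2 * p + 2) * 2 ^ (α + p * β + 2 * p + 1) * (q + 2) ^ (2 * p + 2)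
        * (q + 1) ^ p / (A * B ^ p)
        * (1 - 2 ^ (-(a * δ))) ^ (-(2 * p + 2))) ^ ((p * q - 1)⁻¹) ≤ K) :
    T ≤ 2 * max T₀ ((2 * q + 3) * U 0 / U' 0) := by
  have hp0 : 0 < p := one_pos.trans hp
  have hq0 : 0 < q := one_pos.trans hq
  have hpq : 1 < p * q := one_lt_mul_of_lt_of_le hp hq.le
  have hgap : (0 : ℝ) < 1 - 2 ^ (-(a * δ)) := one_sub_two_rpow_neg_pos (mul_pos ha hδ.1)
  have hKpow := (rpow_inv_le_iff_of_pos (by positivity) hK.le (sub_pos.2 hpq)).1 hKK₀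
  exact (blowup_ODI_system_general hp0.le hq0.le hpq ha hβ hbal hA hB hK.le hR hT₀R rfl
    ⟨hU', hU'', hV', hV'', h2, h3, h4U, h4U', h4V, h4V'.le⟩ h1
    ((blowup_threshold_le hp0 hq0 ha hA hB rfl hδ.1 hδ.2.le).trans hKpow)).le
end

section
/- Let n ≥ 2, 1 < p ≤ q with n−1−(n−1)p/2 ≥ 0 and suppose (n−1)p(pq+2q+1)/2 − npq − (n+1)p = 1. Let C > 0, R > 0, j ≥ 1, a_j = 6·4^{j−1} − 2, and C_j > 0. Let U'', V'' be continuous nonnegative functions such that for all t ≥ R: U''(t) ≥ C ∫₀^{t−R} ρ^{n−1−(n−1)p/2}(t−ρ+R)^{−(n−1)p/2} ( ∫₀^{(t−ρ−R)/2} V''(s) ds )^p dρ and V''(t) ≥ C (t+R)^{−(n−1)q/2} ∫₀^{t−R} ρ^{n−1}(t−ρ+R)^{−(n−1)q/2} ( ∫₀^{(t−ρ−R)/2} U''(s) ds )^q dρ; and suppose U''(t) ≥ C_j (t−a_jR)^{n−1−(n−1)p/2} ( log( (t+(a_j²−2)R)/((a_j+2)(a_j−1)R) ) )^{((pq)^j−1)/(pq−1)}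 for all t ≥ a_jR. Then, with a_{j+1} = 4a_j + 6, one has U''(t) ≥ C_{j+1} (t−a_{j+1}R)^{n−1−(n−1)p/2} ( log( (t+(a_{j+1}²−2)R)/((a_{j+1}−1)(a_{j+1}+2)R) ) )^{((pq)^{j+1}−1)/(pq−1)} for all t ≥ a_{j+1}R, where C_{j+1} = (pq−1) C (C_j')^p / ( (nq+n+1)^p 2^{npq+(n+1)p+n−1} (6a_j)^{(n−1)p²q/2+(2n−1)pq+(3n+1)p/2} (pq)^{j+1} ) and C_j' = C C_j^q / ( n 2^{(n+1)q+n} 3^{nq} a_j^q ). -/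
open Real Set

/-!
Both frame inequalities are used on subintervals only. In the one for `V''`, restrict `ρ` to
`[0, x / 5]` and the inner integral to a final fifth, where `x = t - (2 * a + 1) * R`: the result is
a power of `x` times a power of the logarithm, with no gain. In the one for `U''`, put
`y = t - (4 * a + 6) * R` and restrict `ρ` to `[y / 2, y]`, where the factor
`ρ ^ (n - 1 - (n - 1) * p / 2)` is comparable to its maximum. The critical condition says that the
remaining powers of `t - ρ + R` add up to exactly `-1`, so that integrating `log ^ θ / (t - ρ + R)`
in `ρ` raises the exponent of the logarithm by one; this is the recursion `e ↦ e * p * q + 1` of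
`((p * q) ^ j - 1) / (p * q - 1)`.

Three halvings and three factors `4 / 5` divide the argument of the logarithm by
`8 * (5 / 4) ^ 3 < 16`, while passing from `a` to `4 * a + 6` multiplies `(a + 2) * (a - 1)` by more
than `16`.
-/

section Integrals

open MeasureTheory

lemma intervalIntegral_le_of_subinterval {f g : ℝ → ℝ} {a b c d : ℝ}
    (hac : a ≤ c) (hcd : c ≤ d) (hdb : d ≤ b)
    (hf : IntervalIntegrable f volume a b) (hf0 : ∀ x ∈ Icc a b, 0 ≤ f x)
    (hg : IntervalIntegrable g volume c d) (hgf : ∀ x ∈ Icc c d, g x ≤ f x) :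
    ∫ x in c..d, g x ≤ ∫ x in a..b, f x := by
  have hsub : uIcc c d ⊆ uIcc a b := by
    rw [uIcc_of_le hcd, uIcc_of_le (hac.trans (hcd.trans hdb))]
    exact Icc_subset_Icc hac hdb
  refine (intervalIntegral.integral_mono_on hcd hg (hf.mono_set hsub) hgf).trans ?_
  refine intervalIntegral.integral_mono_interval hac hcd hdb ?_ hf
  filter_upwards [ae_restrict_mem measurableSet_Ioc] with x hx
  exact hf0 x (Ioc_subset_Icc_self hx)

lemma intervalIntegrable_of_locallyIntegrableOn_Ici {f : ℝ → ℝ} {a b : ℝ}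
    (hf : LocallyIntegrableOn f (Ici a)) (hab : a ≤ b) : IntervalIntegrable f volume a b :=
  (hf.integrableOn_compact_subset (by rw [uIcc_of_le hab]; exact Icc_subset_Ici_self)
    isCompact_uIcc).intervalIntegrable

lemma continuousOn_log_rpow_div {L θ b : ℝ} (hL : 0 < L) (hθ : 0 ≤ θ) :
    ContinuousOn (fun v => log (1 + v / L) ^ θ / (v + L)) (Icc 0 b) := by
  refine (ContinuousOn.rpow_const (ContinuousOn.log (by fun_prop) fun v hv => ?_)
    fun _ _ => Or.inr hθ).div (by fun_prop) fun v hv => ?_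
  · have := div_nonneg hv.1 hL.le
    positivity
  · linarith [hv.1]

lemma integral_log_rpow_div {L θ b : ℝ} (hL : 0 < L) (hθ : 0 ≤ θ) (hb : 0 ≤ b) :
    ∫ v in (0 : ℝ)..b, log (1 + v / L) ^ θ / (v + L) = log (1 + b / L) ^ (θ + 1) / (θ + 1) := by
  have hderiv : ∀ v ∈ uIcc 0 b, HasDerivAt (fun v => log (1 + v / L) ^ (θ + 1) / (θ + 1))
      (log (1 + v / L) ^ θ / (v + L)) v := by
    intro v hv
    rw [uIcc_of_le hb] at hv
    have hv0 : 0 < v + L := by linarith [hv.1]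
    have harg : 1 + v / L = (v + L) / L := by field_simp; ring
    have hlin : HasDerivAt (fun v => 1 + v / L) (1 / L) v :=
      ((hasDerivAt_id v).div_const L).const_add 1
    refine (((hlin.log (by rw [harg]; positivity)).rpow_const
      (p := θ + 1) (Or.inr (by linarith))).div_const (θ + 1)).congr_deriv ?_
    rw [add_sub_cancel_right, harg]
    field_simp
  rw [intervalIntegral.integral_eq_sub_of_hasDerivAt hderiv
    ((continuousOn_log_rpow_div hL hθ).intervalIntegrable_of_Icc hb)]
  simp [zero_rpow (by linarith : θ + 1 ≠ 0)]

end Integrals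

section PowLog

/-- The growth profile `x ^ μ * log (1 + x / K) ^ e` of the lower bounds propagated by the
iteration; `x` is the time elapsed since the bound became effective, so only `0 ≤ x` matters. -/
noncomputable def powLog (μ e K x : ℝ) : ℝ :=
  x ^ μ * log (1 + x / K) ^ e

variable {μ e K x : ℝ}

lemma log_one_add_div_nonneg (hK : 0 ≤ K) (hx : 0 ≤ x) : 0 ≤ log (1 + x / K) :=
  log_nonneg (le_add_of_nonneg_right (div_nonneg hx hK))

lemma powLog_nonneg (hK : 0 ≤ K) (hx : 0 ≤ x) : 0 ≤ powLog μ e K x :=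
  mul_nonneg (rpow_nonneg hx _) (rpow_nonneg (log_one_add_div_nonneg hK hx) _)

lemma powLog_le_powLog {L y : ℝ} (hμ : 0 ≤ μ) (he : 0 ≤ e) (hL : 0 < L) (hLK : L ≤ K)
    (hx : 0 ≤ x) (hxy : x ≤ y) : powLog μ e K x ≤ powLog μ e L y := by
  have hK : 0 ≤ K := hL.le.trans hLK
  have hy : 0 ≤ y := hx.trans hxy
  have hlog := log_one_add_div_nonneg hK hx
  unfold powLog
  gcongr

lemma powLog_mul_arg {c : ℝ} (hc : 0 ≤ c) (hx : 0 ≤ x) :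
    powLog μ e K (c * x) = c ^ μ * powLog μ e (K / c) x := by
  rw [powLog, powLog, mul_rpow hc hx, div_div_eq_mul_div, mul_comm x c, mul_assoc]

lemma rpow_mul_powLog {ν : ℝ} (hν : 0 ≤ ν) (hμ : 0 ≤ μ) (hx : 0 ≤ x) :
    x ^ ν * powLog μ e K x = powLog (μ + ν) e K x := by
  rw [powLog, powLog, rpow_add_of_nonneg hx hμ hν]
  ring

lemma powLog_rpow (hK : 0 ≤ K) (hx : 0 ≤ x) (r : ℝ) :
    powLog μ e K x ^ r = powLog (μ * r) (e * r) K x := by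
  have hlog := log_one_add_div_nonneg hK hx
  rw [powLog, powLog, mul_rpow (by positivity) (by positivity), ← rpow_mul hx, ← rpow_mul hlog]

end PowLog

section Frame

open MeasureTheory

/-- The integrand `ρ ^ κ * (t - ρ + R) ^ (-β) * (∫₀^{(t-ρ-R)/2} f) ^ r` common to the two integral
inequalities of the iteration frame. -/
noncomputable def frameIntegrand (κ β r R : ℝ) (f : ℝ → ℝ) (t ρ : ℝ) : ℝ :=
  ρ ^ κ * (t - ρ + R) ^ (-β) * (∫ s in (0 : ℝ)..((t - ρ - R) / 2), f s) ^ r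

variable {f : ℝ → ℝ} {κ β r R t : ℝ}

lemma continuousOn_frameIntegrand (hf : LocallyIntegrableOn f (Ici 0)) (hκ : 0 ≤ κ) (hr : 0 ≤ r)
    (hR : 0 < R) (ht : R ≤ t) : ContinuousOn (frameIntegrand κ β r R f t) (Icc 0 (t - R)) := by
  have hT : 0 ≤ (t - R) / 2 := by linarith
  have hprim : ContinuousOn (fun b => ∫ s in (0 : ℝ)..b, f s) (Icc 0 ((t - R) / 2)) := by
    rw [← uIcc_of_le hT]
    exact intervalIntegral.continuousOn_primitive_interval'
      (intervalIntegrable_of_locallyIntegrableOn_Ici hf hT) left_mem_uIcc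
  refine ContinuousOn.mul (ContinuousOn.mul ?_ ?_) ?_
  · exact continuousOn_id.rpow_const fun _ _ => Or.inr hκ
  · exact ContinuousOn.rpow_const (by fun_prop) fun ρ hρ => Or.inl (by linarith [hρ.2])
  · exact (hprim.comp (by fun_prop) fun ρ hρ => ⟨by linarith [hρ.2], by linarith [hρ.1]⟩).rpow_const
      fun _ _ => Or.inr hr

lemma frameIntegrand_nonneg (hf0 : ∀ s, 0 ≤ s → 0 ≤ f s) (hR : 0 ≤ R) {ρ : ℝ}
    (hρ : ρ ∈ Icc 0 (t - R)) : 0 ≤ frameIntegrand κ β r R f t ρ := by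
  have hint : 0 ≤ ∫ s in (0 : ℝ)..((t - ρ - R) / 2), f s :=
    intervalIntegral.integral_nonneg (by linarith [hρ.2]) fun s hs => hf0 s hs.1
  exact mul_nonneg (mul_nonneg (rpow_nonneg hρ.1 _) (rpow_nonneg (by linarith [hρ.2]) _))
    (rpow_nonneg hint _)

lemma integral_le_integral_frameIntegrand (hf : LocallyIntegrableOn f (Ici 0))
    (hf0 : ∀ s, 0 ≤ s → 0 ≤ f s) (hκ : 0 ≤ κ) (hr : 0 ≤ r) (hR : 0 < R)
    {c d : ℝ} (hc : 0 ≤ c) (hcd : c ≤ d) (hd : d ≤ t - R)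
    {g : ℝ → ℝ} (hg : ContinuousOn g (Icc c d))
    (hgle : ∀ ρ ∈ Icc c d, g ρ ≤ frameIntegrand κ β r R f t ρ) :
    ∫ ρ in c..d, g ρ ≤ ∫ ρ in (0 : ℝ)..(t - R), frameIntegrand κ β r R f t ρ :=
  intervalIntegral_le_of_subinterval hc hcd hd
    ((continuousOn_frameIntegrand hf hκ hr hR (by linarith)).intervalIntegrable_of_Icc
      (by linarith))
    (fun _ => frameIntegrand_nonneg hf0 hR.le) (hg.intervalIntegrable_of_Icc hcd) hgle

lemma frameIntegrand_ge {M ρ : ℝ} (hr : 0 ≤ r) (hR : 0 ≤ R) (hρ : ρ ∈ Icc 0 (t - R))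
    (hM : 0 ≤ M) (hle : M ≤ ∫ s in (0 : ℝ)..((t - ρ - R) / 2), f s) :
    ρ ^ κ * (t - ρ + R) ^ (-β) * M ^ r ≤ frameIntegrand κ β r R f t ρ := by
  have hρ0 := hρ.1
  have hw : 0 ≤ t - ρ + R := by linarith [hρ.2]
  unfold frameIntegrand
  gcongr

lemma powLog_le_integral {A D K μ e z b : ℝ}
    (hf : LocallyIntegrableOn f (Ici 0)) (hf0 : ∀ s, 0 ≤ s → 0 ≤ f s)
    (hA : 0 ≤ A) (hD : 0 ≤ D) (hK : 0 < K) (hμ : 0 ≤ μ) (he : 0 ≤ e) (hz : 0 ≤ z)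
    (hb : A + 5 / 4 * z ≤ b)
    (hbound : ∀ s ∈ Icc (A + z) (A + 5 / 4 * z), D * powLog μ e K (s - A) ≤ f s) :
    D / 4 * powLog (μ + 1) e K z ≤ ∫ s in (0 : ℝ)..b, f s := by
  calc D / 4 * powLog (μ + 1) e K z
      = ∫ _ in (A + z)..(A + 5 / 4 * z), D * powLog μ e K z := by
        rw [← rpow_mul_powLog zero_le_one hμ hz, rpow_one, intervalIntegral.integral_const,
          smul_eq_mul]
        ring
    _ ≤ ∫ s in (0 : ℝ)..b, f s := by
        refine intervalIntegral_le_of_subinterval (by linarith) (by linarith) hb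
          (intervalIntegrable_of_locallyIntegrableOn_Ici hf (by linarith))
          (fun s hs => hf0 s hs.1) intervalIntegrable_const fun s hs => ?_
        refine le_trans ?_ (hbound s hs)
        gcongr
        exact powLog_le_powLog hμ he hK le_rfl hz (by linarith [hs.1])

lemma rpow_div_mul_le_integral_frameIntegrand {M d ν : ℝ}
    (hf : LocallyIntegrableOn f (Ici 0)) (hf0 : ∀ s, 0 ≤ s → 0 ≤ f s) (hR : 0 < R) (hr : 0 ≤ r)
    (hβ : 0 ≤ β) (hν : 1 ≤ ν) (hM : 0 ≤ M) (hd : 0 ≤ d) (hdt : d ≤ t - R)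
    (hinner : ∀ ρ ∈ Icc 0 d, M ≤ ∫ s in (0 : ℝ)..((t - ρ - R) / 2), f s) :
    d ^ ν / ν * ((t + R) ^ (-β) * M ^ r)
      ≤ ∫ ρ in (0 : ℝ)..(t - R), frameIntegrand (ν - 1) β r R f t ρ := by
  calc d ^ ν / ν * ((t + R) ^ (-β) * M ^ r)
      = ∫ ρ in (0 : ℝ)..d, ρ ^ (ν - 1) * ((t + R) ^ (-β) * M ^ r) := by
        rw [intervalIntegral.integral_mul_const, integral_rpow (Or.inl (by linarith)),
          sub_add_cancel, zero_rpow (by linarith), sub_zero]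
    _ ≤ _ := by
        refine integral_le_integral_frameIntegrand hf hf0 (by linarith) hr hR le_rfl hd hdt
          ((continuousOn_id.rpow_const fun _ _ => Or.inr (by linarith)).mul continuousOn_const)
          fun ρ hρ => ?_
        have hρ0 := hρ.1
        refine le_trans ?_
          (frameIntegrand_ge hr hR.le ⟨hρ0, hρ.2.trans hdt⟩ hM (hinner ρ hρ))
        have hweight : (t + R) ^ (-β) ≤ (t - ρ + R) ^ (-β) :=
          rpow_le_rpow_of_nonpos (by linarith [hρ.2]) (by linarith) (by linarith)
        rw [mul_assoc]
        gcongr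

lemma powLog_le_integral_frameIntegrand {A D K μ e ν : ℝ}
    (hf : LocallyIntegrableOn f (Ici 0)) (hf0 : ∀ s, 0 ≤ s → 0 ≤ f s)
    (hA : 0 ≤ A) (hD : 0 ≤ D) (hK : 0 < K) (hR : 0 < R) (hμ : 0 ≤ μ) (he : 0 ≤ e)
    (hr : 0 ≤ r) (hβ : 0 ≤ β) (hν : 1 ≤ ν) (ht : 2 * A + R ≤ t)
    (hbound : ∀ s, A ≤ s → D * powLog μ e K (s - A) ≤ f s) :
    (D / 4) ^ r * (8 / 25) ^ ((μ + 1) * r + ν) / (ν * 2 ^ ν)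
        * powLog ((μ + 1) * r + ν) (e * r) (25 / 8 * K) (t - (2 * A + R)) * (t + R) ^ (-β)
      ≤ ∫ ρ in (0 : ℝ)..(t - R), frameIntegrand (ν - 1) β r R f t ρ := by
  obtain ⟨x, hx⟩ : ∃ x, x = t - (2 * A + R) := ⟨_, rfl⟩
  have hx0 : 0 ≤ x := by linarith
  rw [← hx]
  set z := 8 / 25 * x with hz
  have hz0 : 0 ≤ z := by positivity
  set M := D / 4 * powLog (μ + 1) e K z with hM
  have hM0 : 0 ≤ M := mul_nonneg (by positivity) (powLog_nonneg hK.le hz0)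
  have hinner : ∀ ρ ∈ Icc 0 (x / 5), M ≤ ∫ s in (0 : ℝ)..((t - ρ - R) / 2), f s := fun ρ hρ =>
    powLog_le_integral hf hf0 hA hD hK hμ he hz0 (by linarith [hρ.2])
      fun s hs => hbound s (by linarith [hs.1])
  have hMr : M ^ r = (D / 4) ^ r * powLog ((μ + 1) * r) (e * r) K z := by
    rw [hM, mul_rpow (by positivity) (powLog_nonneg hK.le hz0), powLog_rpow hK.le hz0]
  have hscale : z ^ ν * powLog ((μ + 1) * r) (e * r) K z
      = (8 / 25) ^ ((μ + 1) * r + ν) * powLog ((μ + 1) * r + ν) (e * r) (25 / 8 * K) x := by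
    rw [rpow_mul_powLog (by linarith) (by positivity) hz0, hz,
      powLog_mul_arg (by norm_num) hx0, show K / (8 / 25) = 25 / 8 * K by ring]
  calc _ = (z / 2) ^ ν / ν * ((t + R) ^ (-β) * M ^ r) := by
        rw [hMr, div_rpow hz0 zero_le_two]
        linear_combination -(D / 4) ^ r / (ν * 2 ^ ν) * (t + R) ^ (-β) * hscale
    _ ≤ (x / 5) ^ ν / ν * ((t + R) ^ (-β) * M ^ r) := by
        have hzx : z / 2 ≤ x / 5 := by linarith
        have htR : 0 ≤ t + R := by linarith
        gcongr
    _ ≤ _ := rpow_div_mul_le_integral_frameIntegrand hf hf0 hR hr hβ hν hM0 (by positivity)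
        (by linarith) hinner

lemma log_rpow_div_le_mul_powLog_rpow {K L W c v z e m δ : ℝ} (hcrit : β + δ * r = m * r + 1)
    (hK : 0 < K) (hL : 0 < L) (hW : 0 < W) (hc : 0 < c) (hv : 0 ≤ v) (hm : 0 ≤ m) (he : 0 ≤ e)
    (hr : 0 ≤ r) (hWz : W ≤ c * z) (hWL : W ≤ v + L) (hvz : v / L ≤ z / K) :
    log (1 + v / L) ^ (e * r) / (v + L)
      ≤ c ^ (m * r) * (W ^ (-β) * (W ^ (-δ) * powLog m e K z) ^ r) := by
  have hz : 0 < z := pos_of_mul_pos_right (hW.trans_le hWz) hc.le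
  have hlog := log_one_add_div_nonneg hL.le hv
  have hcancel : W ^ (m * r) * (W ^ (-β) * W ^ (-δ * r)) = W⁻¹ := by
    rw [← rpow_add hW, ← rpow_add hW, ← rpow_neg_one]
    congr 1
    linarith
  have hlog_rpow : 0 ≤ log (1 + z / K) ^ (e * r) :=
    rpow_nonneg (log_one_add_div_nonneg hK.le hz.le) _
  calc log (1 + v / L) ^ (e * r) / (v + L) ≤ log (1 + z / K) ^ (e * r) / W := by gcongr
    _ = W ^ (m * r) * (W ^ (-β) * W ^ (-δ * r)) * log (1 + z / K) ^ (e * r) := by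
        rw [hcancel, div_eq_inv_mul]
    _ ≤ (c * z) ^ (m * r) * (W ^ (-β) * W ^ (-δ * r)) * log (1 + z / K) ^ (e * r) := by
        gcongr
    _ = c ^ (m * r) * (W ^ (-β) * (W ^ (-δ) * powLog m e K z) ^ r) := by
        rw [mul_rpow (rpow_nonneg hW.le _) (powLog_nonneg hK.le hz.le), powLog_rpow hK.le hz.le,
          ← rpow_mul hW.le, mul_rpow hc.le hz.le, powLog]
        ring

lemma powLog_le_integral_of_weighted {B D K W b z e m δ : ℝ}
    (hf : LocallyIntegrableOn f (Ici 0)) (hf0 : ∀ s, 0 ≤ s → 0 ≤ f s)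
    (hB : 0 ≤ B) (hD : 0 ≤ D) (hK : 0 < K) (hR : 0 < R) (hm : 0 ≤ m) (he : 0 ≤ e) (hδ : 0 ≤ δ)
    (hz : 0 ≤ z) (hbound : ∀ s, B ≤ s → D * powLog m e K (s - B) * (s + R) ^ (-δ) ≤ f s)
    (hb : B + 5 / 4 * z ≤ b) (hW : B + 5 / 4 * z + R ≤ W) :
    D * W ^ (-δ) / 4 * powLog (m + 1) e K z ≤ ∫ s in (0 : ℝ)..b, f s := by
  have hW0 : 0 ≤ W := by linarith
  refine powLog_le_integral hf hf0 hB (by positivity) hK hm he hz hb fun s hs => ?_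
  have hpos := powLog_nonneg (μ := m) (e := e) hK.le (by linarith [hs.1] : 0 ≤ s - B)
  have hweight : W ^ (-δ) ≤ (s + R) ^ (-δ) :=
    rpow_le_rpow_of_nonpos (by linarith [hs.1]) (by linarith [hs.2]) (by linarith)
  calc D * W ^ (-δ) * powLog m e K (s - B) = D * powLog m e K (s - B) * W ^ (-δ) := by ring
    _ ≤ D * powLog m e K (s - B) * (s + R) ^ (-δ) := by gcongr
    _ ≤ f s := hbound s (by linarith [hs.1])

lemma log_rpow_div_le_frameIntegrand_of_critical {B D K c e m δ y ρ : ℝ}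
    (hf : LocallyIntegrableOn f (Ici 0)) (hf0 : ∀ s, 0 ≤ s → 0 ≤ f s)
    (hB : 0 ≤ B) (hD : 0 ≤ D) (hK : 0 < K) (hR : 0 < R) (hκ : 0 ≤ κ) (hm : 0 ≤ m) (he : 0 ≤ e)
    (hr : 0 ≤ r) (hδ : 0 ≤ δ) (hcrit : β + δ * r = (m + 1) * r + 1)
    (hBc : 2 * B + 5 * R ≤ 6 / 5 * c * R) (hBK : 2 * B + 5 * R ≤ 5 / 2 * K)
    (hbound : ∀ s, B ≤ s → D * powLog m e K (s - B) * (s + R) ^ (-δ) ≤ f s)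
    (hy : 0 ≤ y) (hρ : ρ ∈ Icc (y / 2) y) :
    (y / 2) ^ κ * ((D / 4) ^ r / c ^ ((m + 1) * r))
        * (log (1 + (y - ρ) / (5 / 2 * K)) ^ (e * r) / (y - ρ + 5 / 2 * K))
      ≤ frameIntegrand κ β r R f (2 * B + 4 * R + y) ρ := by
  obtain ⟨hyρ, hρy⟩ := hρ
  have hρ0 : 0 ≤ ρ := by linarith
  set W := 2 * B + 4 * R + y - ρ + R
  set z := 2 / 5 * (y - ρ + 3 * R) with hz
  have hW0 : 0 < W := by linarith
  have hz0 : 0 ≤ z := by linarith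
  have hc : 25 / 6 ≤ c := by nlinarith
  have hE := powLog_nonneg (μ := m + 1) (e := e) hK.le hz0
  have hinner := powLog_le_integral_of_weighted hf hf0 hB hD hK hR hm he hδ hz0 hbound
    (b := (2 * B + 4 * R + y - ρ - R) / 2) (W := W) (by linarith) (by linarith)
  refine le_trans ?_ (frameIntegrand_ge hr hR.le ⟨hρ0, by linarith⟩ (by positivity) hinner)
  have hlog := log_rpow_div_le_mul_powLog_rpow (v := y - ρ) (L := 5 / 2 * K) (W := W) (z := z)
    (c := c) hcrit hK (by positivity) hW0 (by linarith) (by linarith) (by positivity) he hr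
    (by nlinarith) (by linarith) (by
      rw [div_le_div_iff₀ (by positivity) hK]
      nlinarith)
  calc _ ≤ ρ ^ κ * ((D / 4) ^ r / c ^ ((m + 1) * r)) * (c ^ ((m + 1) * r)
          * (W ^ (-β) * (W ^ (-δ) * powLog (m + 1) e K z) ^ r)) := by
        have := log_one_add_div_nonneg (x := y - ρ) (K := 5 / 2 * K) (by positivity) (by linarith)
        have : 0 ≤ y - ρ := by linarith
        have : 0 ≤ c := by linarith
        gcongr
    _ = ρ ^ κ * W ^ (-β) * (D * W ^ (-δ) / 4 * powLog (m + 1) e K z) ^ r := by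
        have : c ^ ((m + 1) * r) ≠ 0 := (rpow_pos_of_pos (by linarith) _).ne'
        rw [show D * W ^ (-δ) / 4 * powLog (m + 1) e K z
          = D / 4 * (W ^ (-δ) * powLog (m + 1) e K z) by ring,
          mul_rpow (x := D / 4) (by positivity) (by positivity)]
        field_simp

lemma powLog_le_integral_frameIntegrand_of_critical {B D K c e m δ : ℝ}
    (hf : LocallyIntegrableOn f (Ici 0)) (hf0 : ∀ s, 0 ≤ s → 0 ≤ f s)
    (hB : 0 ≤ B) (hD : 0 ≤ D) (hK : 0 < K) (hR : 0 < R) (hκ : 0 ≤ κ) (hm : 0 ≤ m) (he : 0 ≤ e)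
    (hr : 0 ≤ r) (hδ : 0 ≤ δ) (hcrit : β + δ * r = (m + 1) * r + 1)
    (hBc : 2 * B + 5 * R ≤ 6 / 5 * c * R) (hBK : 2 * B + 5 * R ≤ 5 / 2 * K)
    (hbound : ∀ s, B ≤ s → D * powLog m e K (s - B) * (s + R) ^ (-δ) ≤ f s)
    (ht : 2 * B + 4 * R ≤ t) :
    (D / 4) ^ r / (2 ^ κ * c ^ ((m + 1) * r) * (e * r + 1))
        * powLog κ (e * r + 1) (5 * K) (t - (2 * B + 4 * R))
      ≤ ∫ ρ in (0 : ℝ)..(t - R), frameIntegrand κ β r R f t ρ := by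
  obtain ⟨y, rfl⟩ : ∃ y, t = 2 * B + 4 * R + y := ⟨t - (2 * B + 4 * R), by ring⟩
  have hy : 0 ≤ y := by linarith
  have hL : 0 < 5 / 2 * K := by positivity
  have her : 0 ≤ e * r := by positivity
  set G : ℝ → ℝ := fun v => log (1 + v / (5 / 2 * K)) ^ (e * r) / (v + 5 / 2 * K) with hG
  have hG_int : ∫ ρ in (y / 2)..y, G (y - ρ)
      = log (1 + y / (5 * K)) ^ (e * r + 1) / (e * r + 1) := by
    rw [intervalIntegral.integral_comp_sub_left G y, sub_self, sub_half, hG,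
      integral_log_rpow_div hL her (by positivity),
      show y / 2 / (5 / 2 * K) = y / (5 * K) by field_simp]
  have hG_cont : ContinuousOn (fun ρ => G (y - ρ)) (Icc (y / 2) y) :=
    (continuousOn_log_rpow_div (b := y) hL her).comp (by fun_prop)
      fun ρ hρ => ⟨by linarith [hρ.2], by linarith [hρ.1]⟩
  calc _ = ∫ ρ in (y / 2)..y, (y / 2) ^ κ * ((D / 4) ^ r / c ^ ((m + 1) * r)) * G (y - ρ) := by
        rw [intervalIntegral.integral_const_mul, hG_int, add_sub_cancel_left, powLog,
          div_rpow hy zero_le_two]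
        field_simp
    _ ≤ _ := integral_le_integral_frameIntegrand hf hf0 hκ hr hR (by positivity) (by linarith)
        (by linarith) (continuousOn_const.mul hG_cont)
        fun ρ hρ => log_rpow_div_le_frameIntegrand_of_critical hf hf0 hB hD hK hR hκ hm he hr hδ
          hcrit hBc hBK hbound hy hρ

end Frame

section Iteration

open MeasureTheory

lemma frame_constant_le {ν q a C D : ℝ} (hν : 1 ≤ ν) (hq : 0 ≤ q) (ha : 1 ≤ a) (hC : 0 ≤ C)
    (hD : 0 ≤ D) :
    C * D ^ q / (ν * 2 ^ ((ν + 1) * q + ν) * 3 ^ (ν * q) * a ^ q)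
      ≤ C * ((D / 4) ^ q / (ν * 2 ^ ν)) := by
  have hsplit : (2 : ℝ) ^ ((ν + 1) * q + ν) = 2 ^ ((ν + 1) * q) * 2 ^ ν :=
    rpow_add two_pos _ _
  have h4 : (4 : ℝ) ^ q ≤ 2 ^ ((ν + 1) * q) := by
    rw [show (4 : ℝ) = 2 ^ (2 : ℝ) by norm_num, ← rpow_mul zero_le_two]
    gcongr <;> linarith
  have h3 : (1 : ℝ) ≤ 3 ^ (ν * q) := one_le_rpow (by norm_num) (by positivity)
  have haq : 1 ≤ a ^ q := one_le_rpow ha hq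
  calc _ ≤ C * D ^ q / (ν * (4 ^ q * 2 ^ ν) * 1 * 1) := by
        rw [hsplit]
        gcongr
    _ = C * ((D / 4) ^ q / (ν * 2 ^ ν)) := by
        rw [div_rpow hD (by norm_num)]
        field_simp

lemma rpow_mul_le_rpow_six_mul {a X E Y : ℝ} (ha : 4 ≤ a) (hY : 0 ≤ Y) (hYX : Y ≤ X)
    (hXE : 3 / 2 * X ≤ E) : (25 / 8) ^ Y * (5 * a) ^ X ≤ (6 * a) ^ E := by
  have hX : 0 ≤ X := hY.trans hYX
  have hbase : 16 * a ≤ (6 * a) ^ (3 / 2 : ℝ) := by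
    have hsqrt : 8 / 3 ≤ √(6 * a) := le_sqrt_of_sq_le (by linarith)
    rw [show (3 / 2 : ℝ) = 1 + 1 / 2 by norm_num, rpow_add (by positivity), rpow_one,
      ← sqrt_eq_rpow]
    nlinarith
  calc (25 / 8) ^ Y * (5 * a) ^ X ≤ (25 / 8) ^ X * (5 * a) ^ X := by
        gcongr
        norm_num
    _ = (125 / 8 * a) ^ X := by
        rw [← mul_rpow (by norm_num) (by positivity)]
        ring_nf
    _ ≤ ((6 * a) ^ (3 / 2 : ℝ)) ^ X := by
        gcongr
        linarith
    _ ≤ (6 * a) ^ E := by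
        rw [← rpow_mul (by positivity)]
        gcongr
        linarith

lemma critical_frame_constant_le {ν p q a D α m : ℝ} (hν : 2 ≤ ν) (hp : 0 < p) (hq : 0 < q)
    (hpq : 1 < p * q) (ha : 4 ≤ a) (hD : 0 ≤ D) (hα0 : 0 ≤ α)
    (hα : α = ν - 1 - (ν - 1) * p / 2) (hm : m = (α + 1) * q + ν) :
    D ^ p / ((ν * q + ν + 1) ^ p * 2 ^ (ν * p * q + (ν + 1) * p + ν - 1)
          * (6 * a) ^ ((ν - 1) * p ^ 2 * q / 2 + (2 * ν - 1) * p * q + (3 * ν + 1) * p / 2))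
      ≤ (D * (8 / 25) ^ m / 4) ^ p / (2 ^ α * (5 * a) ^ ((m + 1) * p)) := by
  have hm0 : 0 ≤ m := by rw [hm]; positivity
  have hν1 : 1 ≤ (ν * q + ν + 1) ^ p := one_le_rpow (by nlinarith) hp.le
  have h2 : (4 : ℝ) ^ p * 2 ^ α ≤ 2 ^ (ν * p * q + (ν + 1) * p + ν - 1) := by
    rw [show (4 : ℝ) = 2 ^ (2 : ℝ) by norm_num, ← rpow_mul zero_le_two, ← rpow_add two_pos]
    gcongr
    · exact one_le_two
    · nlinarith
  have h6 : (25 / 8) ^ (m * p) * (5 * a) ^ ((m + 1) * p)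
      ≤ (6 * a) ^ ((ν - 1) * p ^ 2 * q / 2 + (2 * ν - 1) * p * q + (3 * ν + 1) * p / 2) := by
    refine rpow_mul_le_rpow_six_mul ha (by positivity) (by linarith) ?_
    have hgap : 0 ≤ p * (5 * (ν - 1) * (p * q - 1) + 2 * (ν - 2) * q + (5 * ν - 9)) :=
      mul_nonneg hp.le (by nlinarith [mul_nonneg (sub_nonneg.2 hν) hq.le])
    rw [hm, hα]
    linear_combination hgap / 4
  have hD_pow : (D * (8 / 25) ^ m / 4) ^ p = D ^ p / (25 / 8) ^ (m * p) / 4 ^ p := by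
    rw [show (8 / 25 : ℝ) = (25 / 8)⁻¹ by norm_num, inv_rpow (by norm_num), ← div_eq_mul_inv,
      div_rpow (by positivity) (by norm_num), div_rpow hD (by positivity),
      ← rpow_mul (by norm_num)]
  calc _ ≤ D ^ p / (1 * (4 ^ p * 2 ^ α) * ((25 / 8) ^ (m * p) * (5 * a) ^ ((m + 1) * p))) := by
        gcongr
    _ = (D * (8 / 25) ^ m / 4) ^ p / (2 ^ α * (5 * a) ^ ((m + 1) * p)) := by
        rw [hD_pow]
        field_simp

lemma geom_quotient_mul_add_one {P : ℝ} (hP : P ≠ 1) (j : ℕ) :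
    (P ^ j - 1) / (P - 1) * P + 1 = (P ^ (j + 1) - 1) / (P - 1) := by
  have : P - 1 ≠ 0 := sub_ne_zero.2 hP
  field_simp
  ring

lemma sub_one_mul_div_mul_pow_succ_le {P C N Q : ℝ} (hP : 1 < P) (hC : 0 ≤ C) (hN : 0 ≤ N)
    (hQ : 0 ≤ Q) (j : ℕ) :
    (P - 1) * C * N / (Q * P ^ (j + 1)) ≤ C * (N / Q) / ((P ^ (j + 1) - 1) / (P - 1)) := by
  have hpow : 1 < P ^ (j + 1) := one_lt_pow₀ hP j.succ_ne_zero
  calc (P - 1) * C * N / (Q * P ^ (j + 1)) = C * (N / Q) * ((P - 1) / P ^ (j + 1)) := by ring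
    _ ≤ C * (N / Q) * ((P - 1) / (P ^ (j + 1) - 1)) := by
        gcongr
        linarith
    _ = C * (N / Q) / ((P ^ (j + 1) - 1) / (P - 1)) := by rw [div_div_eq_mul_div, mul_div_assoc]

lemma powLog_sub_mul_eq {μ e a R t : ℝ} (ha : 1 < a) (hR : 0 < R) :
    powLog μ e ((a + 2) * (a - 1) * R) (t - a * R)
      = (t - a * R) ^ μ * log ((t + (a ^ 2 - 2) * R) / ((a + 2) * (a - 1) * R)) ^ e := by
  have hK : (a + 2) * (a - 1) * R ≠ 0 := by
    have : 0 < a - 1 := by linarith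
    positivity
  rw [powLog, one_add_div hK]
  ring_nf

variable {ν p q C R a D e K : ℝ} {U V : ℝ → ℝ}

lemma powLog_le_of_frame (hν : 1 ≤ ν) (hq : 0 ≤ q) (hα : 0 ≤ ν - 1 - (ν - 1) * p / 2)
    (hC : 0 ≤ C) (hR : 0 < R) (ha : 1 ≤ a) (hD : 0 ≤ D) (hK : 0 < K) (he : 0 ≤ e)
    (hU : LocallyIntegrableOn U (Ici 0)) (hU0 : ∀ s, 0 ≤ s → 0 ≤ U s)
    (hVframe : ∀ t, R ≤ t → C * (t + R) ^ (-((ν - 1) * q / 2))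
      * (∫ ρ in (0 : ℝ)..(t - R), frameIntegrand (ν - 1) ((ν - 1) * q / 2) q R U t ρ) ≤ V t)
    (hbound : ∀ s, a * R ≤ s →
      D * powLog (ν - 1 - (ν - 1) * p / 2) e K (s - a * R) ≤ U s)
    {m : ℝ} (hm : m = (ν - 1 - (ν - 1) * p / 2 + 1) * q + ν) {t : ℝ} (ht : (2 * a + 1) * R ≤ t) :
    C * D ^ q / (ν * 2 ^ ((ν + 1) * q + ν) * 3 ^ (ν * q) * a ^ q) * (8 / 25) ^ m
        * powLog m (e * q) (25 / 8 * K) (t - (2 * a + 1) * R) * (t + R) ^ (-((ν - 1) * q))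
      ≤ V t := by
  have haR : R ≤ a * R := le_mul_of_one_le_left hR.le ha
  have htR : 0 < t + R := by linarith
  have hβ : 0 ≤ (ν - 1) * q / 2 := by
    have : 0 ≤ ν - 1 := by linarith
    positivity
  have hstep := powLog_le_integral_frameIntegrand (t := t) hU hU0 (by linarith) hD hK hR hα he hq
    hβ hν (by linarith) hbound
  rw [← hm, show 2 * (a * R) + R = (2 * a + 1) * R by ring] at hstep
  have hpos := powLog_nonneg (μ := m) (e := e * q) (K := 25 / 8 * K) (by positivity)
    (sub_nonneg.2 ht)
  refine le_trans ?_ (hVframe t (by linarith))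
  calc _ ≤ C * ((D / 4) ^ q / (ν * 2 ^ ν)) * (8 / 25) ^ m
          * powLog m (e * q) (25 / 8 * K) (t - (2 * a + 1) * R) * (t + R) ^ (-((ν - 1) * q)) := by
        gcongr
        exact frame_constant_le hν hq ha hC hD
    _ = C * (t + R) ^ (-((ν - 1) * q / 2)) * ((D / 4) ^ q * (8 / 25) ^ m / (ν * 2 ^ ν)
          * powLog m (e * q) (25 / 8 * K) (t - (2 * a + 1) * R)
          * (t + R) ^ (-((ν - 1) * q / 2))) := by
        rw [show -((ν - 1) * q) = -((ν - 1) * q / 2) + -((ν - 1) * q / 2) by ring,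
          rpow_add htR]
        ring
    _ ≤ _ := by gcongr

lemma powLog_le_of_critical_frame (hν : 2 ≤ ν) (hp : 0 < p) (hq : 0 < q) (hpq : 1 < p * q)
    (hα : 0 ≤ ν - 1 - (ν - 1) * p / 2)
    (hcrit : (ν - 1) * p * (p * q + 2 * q + 1) / 2 - ν * p * q - (ν + 1) * p = 1)
    (hC : 0 ≤ C) (hR : 0 < R) (ha : 4 ≤ a) (hD : 0 ≤ D) (he : 0 ≤ e)
    (hK : (4 * a + 7) * R ≤ 5 / 2 * K)
    (hV : LocallyIntegrableOn V (Ici 0)) (hV0 : ∀ s, 0 ≤ s → 0 ≤ V s)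
    (hUframe : ∀ t, R ≤ t → C * (∫ ρ in (0 : ℝ)..(t - R),
      frameIntegrand (ν - 1 - (ν - 1) * p / 2) ((ν - 1) * p / 2) p R V t ρ) ≤ U t)
    {m : ℝ} (hm : m = (ν - 1 - (ν - 1) * p / 2 + 1) * q + ν)
    (hbound : ∀ s, (2 * a + 1) * R ≤ s →
      D * (8 / 25) ^ m * powLog m e K (s - (2 * a + 1) * R) * (s + R) ^ (-((ν - 1) * q)) ≤ V s)
    {t : ℝ} (ht : (4 * a + 6) * R ≤ t) :
    C * (D ^ p / ((ν * q + ν + 1) ^ p * 2 ^ (ν * p * q + (ν + 1) * p + ν - 1)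
          * (6 * a) ^ ((ν - 1) * p ^ 2 * q / 2 + (2 * ν - 1) * p * q + (3 * ν + 1) * p / 2)))
        / (e * p + 1)
        * powLog (ν - 1 - (ν - 1) * p / 2) (e * p + 1) (5 * K) (t - (4 * a + 6) * R)
      ≤ U t := by
  have haR : 4 * R ≤ a * R := by gcongr
  have hK0 : 0 < K := by linarith
  have hm0 : 0 ≤ m := by rw [hm]; positivity
  have hδ : 0 ≤ (ν - 1) * q := mul_nonneg (by linarith) hq.le
  have hstep := powLog_le_integral_frameIntegrand_of_critical (t := t) (c := 5 * a)
    (β := (ν - 1) * p / 2) hV hV0 (by linarith) (by positivity) hK0 hR hα hm0 he hp.le hδ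
    (by rw [hm]; linear_combination hcrit) (by linarith) (by linarith) hbound (by linarith)
  rw [show 2 * ((2 * a + 1) * R) + 4 * R = (4 * a + 6) * R by ring] at hstep
  have hpos := powLog_nonneg (μ := ν - 1 - (ν - 1) * p / 2) (e := e * p + 1) (K := 5 * K)
    (by positivity) (sub_nonneg.2 ht)
  have hep : 0 ≤ e * p + 1 := by positivity
  rw [← div_div] at hstep
  calc _ ≤ C * ((D * (8 / 25) ^ m / 4) ^ p
          / (2 ^ (ν - 1 - (ν - 1) * p / 2) * (5 * a) ^ ((m + 1) * p))) / (e * p + 1)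
        * powLog (ν - 1 - (ν - 1) * p / 2) (e * p + 1) (5 * K) (t - (4 * a + 6) * R) :=
        mul_le_mul_of_nonneg_right (div_le_div_of_nonneg_right (mul_le_mul_of_nonneg_left
          (critical_frame_constant_le hν hp hq hpq ha hD hα rfl hm) hC) hep) hpos
    _ ≤ U t := by
        rw [mul_div_assoc, mul_assoc]
        exact (mul_le_mul_of_nonneg_left hstep hC).trans (hUframe t (by linarith))

theorem iteration_inductive_step_general {D' D₁ : ℝ} {j : ℕ}
    (hν : 2 ≤ ν) (hp : 0 < p) (hpq : 1 < p * q)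
    (hexp : 0 ≤ ν - 1 - (ν - 1) * p / 2)
    (hcrit : (ν - 1) * p * (p * q + 2 * q + 1) / 2 - ν * p * q - (ν + 1) * p = 1)
    (hC : 0 ≤ C) (hR : 0 < R) (ha : 4 ≤ a) (hD : 0 ≤ D)
    (hD' : D' = C * D ^ q / (ν * 2 ^ ((ν + 1) * q + ν) * 3 ^ (ν * q) * a ^ q))
    (hD₁ : D₁ = (p * q - 1) * C * D' ^ p
      / ((ν * q + ν + 1) ^ p * 2 ^ (ν * p * q + (ν + 1) * p + ν - 1)
        * (6 * a) ^ ((ν - 1) * p ^ 2 * q / 2 + (2 * ν - 1) * p * q + (3 * ν + 1) * p / 2)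
        * (p * q) ^ (j + 1)))
    (hU : LocallyIntegrableOn U (Ici 0)) (hV : LocallyIntegrableOn V (Ici 0))
    (hU0 : ∀ s, 0 ≤ s → 0 ≤ U s) (hV0 : ∀ s, 0 ≤ s → 0 ≤ V s)
    (hUframe : ∀ t, R ≤ t → C * (∫ ρ in (0 : ℝ)..(t - R),
      frameIntegrand (ν - 1 - (ν - 1) * p / 2) ((ν - 1) * p / 2) p R V t ρ) ≤ U t)
    (hVframe : ∀ t, R ≤ t → C * (t + R) ^ (-((ν - 1) * q / 2))
      * (∫ ρ in (0 : ℝ)..(t - R), frameIntegrand (ν - 1) ((ν - 1) * q / 2) q R U t ρ) ≤ V t)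
    (hbound : ∀ t, a * R ≤ t → D * (t - a * R) ^ (ν - 1 - (ν - 1) * p / 2)
      * log ((t + (a ^ 2 - 2) * R) / ((a + 2) * (a - 1) * R)) ^ (((p * q) ^ j - 1) / (p * q - 1))
      ≤ U t) {t : ℝ} (ht : (4 * a + 6) * R ≤ t) :
    D₁ * (t - (4 * a + 6) * R) ^ (ν - 1 - (ν - 1) * p / 2)
      * log ((t + ((4 * a + 6) ^ 2 - 2) * R) / ((4 * a + 6 - 1) * (4 * a + 6 + 2) * R))
        ^ (((p * q) ^ (j + 1) - 1) / (p * q - 1)) ≤ U t := by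
  have hq : 0 < q := pos_of_mul_pos_right (by linarith) hp.le
  set e := ((p * q) ^ j - 1) / (p * q - 1) with he
  set K := (a + 2) * (a - 1) * R with hK
  have he0 : 0 ≤ e := div_nonneg (sub_nonneg.2 (one_le_pow₀ hpq.le)) (by linarith)
  have hK0 : 0 < K := mul_pos (mul_pos (by linarith) (by linarith)) hR
  have hD'0 : 0 ≤ D' := by rw [hD']; positivity
  have hU_bound : ∀ s, a * R ≤ s → D * powLog (ν - 1 - (ν - 1) * p / 2) e K (s - a * R) ≤ U s := by
    intro s hs
    rw [powLog_sub_mul_eq (by linarith) hR, ← mul_assoc]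
    exact hbound s hs
  have hV_bound := fun s hs => powLog_le_of_frame (t := s) (by linarith) hq.le hexp hC hR
    (by linarith) hD hK0 he0 hU hU0 hVframe hU_bound rfl hs
  rw [← hD'] at hV_bound
  have hU_next := powLog_le_of_critical_frame hν hp hq hpq hexp hcrit hC hR ha hD'0
    (by positivity) (by rw [hK]; nlinarith) hV hV0 hUframe rfl hV_bound ht
  have hexponent : e * q * p + 1 = ((p * q) ^ (j + 1) - 1) / (p * q - 1) := by
    rw [← geom_quotient_mul_add_one hpq.ne', ← he]
    ring
  rw [hexponent] at hU_next
  have hx : 0 ≤ t - (4 * a + 6) * R := sub_nonneg.2 ht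
  have he1 : 0 ≤ ((p * q) ^ (j + 1) - 1) / (p * q - 1) := by rw [← hexponent]; positivity
  refine le_trans ?_ hU_next
  rw [mul_assoc, mul_comm (4 * a + 6 - 1), ← powLog_sub_mul_eq (by linarith) hR]
  refine mul_le_mul ?_ (powLog_le_powLog hexp he1 (by positivity) (by nlinarith) hx le_rfl)
    (powLog_nonneg (by nlinarith) hx) (by positivity)
  exact hD₁ ▸ sub_one_mul_div_mul_pow_succ_le hpq hC (by positivity) (by positivity) j

end Iteration

/-- Inductive step of the iteration argument: if `U''` satisfies the `j`-th
iteration bound with constant `C_j`, then it satisfies the `(j+1)`-st bound with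
`a_{j+1} = 4a_j + 6` and the explicitly given constant `C_{j+1}`. -/
theorem iteration_inductive_step
    (n : ℕ) (p q C R : ℝ) (j : ℕ) (aj Cj Cj' Cj1 : ℝ) (U'' V'' : ℝ → ℝ)
    (hn : 2 ≤ n) (hp : 1 < p) (hpq : p ≤ q)
    (hexp : 0 ≤ (n : ℝ) - 1 - ((n : ℝ) - 1) * p / 2)
    (hcrit : ((n : ℝ) - 1) * p * (p * q + 2 * q + 1) / 2
        - (n : ℝ) * p * q - ((n : ℝ) + 1) * p = 1)
    (hC : 0 < C) (hR : 0 < R) (hj : 1 ≤ j)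
    (haj : aj = 6 * (4:ℝ) ^ (j - 1) - 2)
    (hCj : 0 < Cj)
    (hCj' : Cj' = C * Cj ^ q / ((n : ℝ) * 2 ^ (((n : ℝ) + 1) * q + (n : ℝ))
        * 3 ^ ((n : ℝ) * q) * aj ^ q))
    (hCj1 : Cj1 = (p * q - 1) * C * Cj' ^ p
        / (((n : ℝ) * q + (n : ℝ) + 1) ^ p
          * 2 ^ ((n : ℝ) * p * q + ((n : ℝ) + 1) * p + (n : ℝ) - 1)
          * (6 * aj) ^ (((n : ℝ) - 1) * p ^ 2 * q / 2 + (2 * (n : ℝ) - 1) * p * q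
              + (3 * (n : ℝ) + 1) * p / 2)
          * (p * q) ^ (j + 1)))
    (hUcont : Continuous U'') (hVcont : Continuous V'')
    (hUnonneg : ∀ s : ℝ, 0 ≤ U'' s) (hVnonneg : ∀ s : ℝ, 0 ≤ V'' s)
    (hUframe : ∀ t : ℝ, R ≤ t →
      C * (∫ ρ in (0:ℝ)..(t - R),
          ρ ^ ((n : ℝ) - 1 - ((n : ℝ) - 1) * p / 2)
          * (t - ρ + R) ^ (-(((n : ℝ) - 1) * p / 2))
          * (∫ s in (0:ℝ)..((t - ρ - R) / 2), V'' s) ^ p)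
        ≤ U'' t)
    (hVframe : ∀ t : ℝ, R ≤ t →
      C * (t + R) ^ (-(((n : ℝ) - 1) * q / 2)) * (∫ ρ in (0:ℝ)..(t - R),
          ρ ^ ((n : ℝ) - 1) * (t - ρ + R) ^ (-(((n : ℝ) - 1) * q / 2))
          * (∫ s in (0:ℝ)..((t - ρ - R) / 2), U'' s) ^ q)
        ≤ V'' t)
    (hUj : ∀ t : ℝ, aj * R ≤ t →
      Cj * (t - aj * R) ^ ((n : ℝ) - 1 - ((n : ℝ) - 1) * p / 2)
        * (Real.log ((t + (aj ^ 2 - 2) * R) / ((aj + 2) * (aj - 1) * R)))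
            ^ (((p * q) ^ j - 1) / (p * q - 1))
        ≤ U'' t) :
    ∀ t : ℝ, (4 * aj + 6) * R ≤ t →
      Cj1 * (t - (4 * aj + 6) * R) ^ ((n : ℝ) - 1 - ((n : ℝ) - 1) * p / 2)
        * (Real.log ((t + ((4 * aj + 6) ^ 2 - 2) * R)
            / (((4 * aj + 6) - 1) * ((4 * aj + 6) + 2) * R)))
            ^ (((p * q) ^ (j + 1) - 1) / (p * q - 1))
        ≤ U'' t := by
  have hn' : (2 : ℝ) ≤ n := mod_cast hn
  have ha : 4 ≤ aj := by linarith [one_le_pow₀ (n := j - 1) (by norm_num : (1 : ℝ) ≤ 4)]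
  exact fun t ht => iteration_inductive_step_general hn' (by linarith) (by nlinarith) hexp hcrit
    hC.le hR ha hCj.le hCj' hCj1 (hUcont.locallyIntegrable.locallyIntegrableOn _)
    (hVcont.locallyIntegrable.locallyIntegrableOn _) (fun s _ => hUnonneg s)
    (fun s _ => hVnonneg s) hUframe hVframe hUj ht
end
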